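/- Let r ≥ 3 and let G be a finite simple r-regular graph with at least one vertex. Let X ⊆ V(G) be a feedback vertex set of G, i.e., the subgraph of G induced by V(G) \ X is acyclic. Then (r − 2) · |V(G)| + 2 ≤ 2r · |X|. -/

import Mathlib

open scoped Classical

/-- A finite acyclic graph on a nonempty vertex type has fewer edges than vertices. -/
theorem SimpleGraph.IsAcyclic.card_edgeFinset_add_one_le {W : Type*} [Fintype W] [Nonempty W]
    {F : SimpleGraph W} [Fintype F.edgeSet] (hF : F.IsAcyclic) :
    F.edgeFinset.card + 1 ≤ Fintype.card W := by
  obtain ⟨T, hFT, -, hT⟩ :=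
    SimpleGraph.connected_top.exists_isTree_le_of_le_of_isAcyclic (le_top : F ≤ ⊤) hF
  rw [← hT.card_edgeFinset]
  exact Nat.add_le_add_right (Finset.card_le_card (SimpleGraph.edgeFinset_mono hFT)) 1

/-- The degree sum over the complement of `X` is at most twice the number of edges avoiding `X`
plus the degree sum over `X`. -/
theorem SimpleGraph.sum_degree_compl_le {V : Type*} [Fintype V] (G : SimpleGraph V)
    (X : Finset V) :
    ∑ v ∈ Xᶜ, G.degree v ≤
      2 * (G.induce {v : V | v ∉ X}).edgeFinset.card + ∑ v ∈ X, G.degree v := by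
  have hsplit (v : V) : G.degree v =
      (Xᶜ.filter (G.Adj v)).card + (X.filter (G.Adj v)).card := by
    rw [← G.card_neighborFinset_eq_degree, G.neighborFinset_eq_filter,
      ← Finset.card_filter_add_card_filter_not (fun u => u ∉ X)]
    congr 2 <;> ext u <;> simp [and_comm]
  have hind (v : {v : V | v ∉ X}) :
      (G.induce {v : V | v ∉ X}).degree v = (Xᶜ.filter (G.Adj v)).card := by
    rw [← SimpleGraph.card_neighborFinset_eq_degree,
      ← Finset.card_map (Function.Embedding.subtype _)]
    congr 1
    ext u
    simp [and_comm]
  have hinside : ∑ v ∈ Xᶜ, (Xᶜ.filter (G.Adj v)).card =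
      2 * (G.induce {v : V | v ∉ X}).edgeFinset.card := by
    rw [← SimpleGraph.sum_degrees_eq_twice_card_edges, Finset.sum_congr rfl fun v _ => hind v]
    exact Finset.sum_subtype (p := fun v => v ∈ {v : V | v ∉ X}) _ (by simp) _
  have hcross : ∑ v ∈ Xᶜ, (X.filter (G.Adj v)).card = ∑ v ∈ X, (Xᶜ.filter (G.Adj v)).card := by
    refine (Finset.sum_card_bipartiteAbove_eq_sum_card_bipartiteBelow G.Adj).trans ?_
    simp [Finset.bipartiteBelow, G.adj_comm]
  calc ∑ v ∈ Xᶜ, G.degree v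
      = 2 * (G.induce {v : V | v ∉ X}).edgeFinset.card + ∑ v ∈ X, (Xᶜ.filter (G.Adj v)).card := by
        rw [Finset.sum_congr rfl fun v _ => hsplit v, Finset.sum_add_distrib, hinside, hcross]
    _ ≤ _ := by
        gcongr with v
        rw [hsplit v]
        exact Nat.le_add_right _ _

/-- if `G` is a nonempty `r`-regular graph with `r ≥ 3` and `X` is a
feedback vertex set of `G`, then `(r - 2) · |V(G)| + 2 ≤ 2r · |X|`. -/
theorem stmt_16 {V : Type*} [Fintype V] [Nonempty V] (G : SimpleGraph V)
    (r : ℕ) (hr : 3 ≤ r) (hreg : ∀ v : V, G.degree v = r)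
    (X : Finset V)
    (hX : (G.induce {v : V | v ∉ X}).IsAcyclic) :
    (r - 2) * Fintype.card V + 2 ≤ 2 * r * X.card := by
  have hsum := G.sum_degree_compl_le X
  simp only [hreg, Finset.sum_const, smul_eq_mul] at hsum
  have hcard := X.card_add_card_compl
  have hpos : 0 < Fintype.card V := Fintype.card_pos
  obtain ⟨s, rfl⟩ := Nat.exists_eq_add_of_le' (show 2 ≤ r by omega)
  rw [Nat.add_sub_cancel, ← hcard]
  rcases Xᶜ.eq_empty_or_nonempty with hempty | ⟨w, hw⟩
  · rw [hempty, Finset.card_empty] at hcard ⊢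
    nlinarith
  · have : Nonempty {v : V | v ∉ X} := ⟨⟨w, by simpa using hw⟩⟩
    have hforest : (G.induce {v : V | v ∉ X}).edgeFinset.card + 1 ≤ _ :=
      hX.card_edgeFinset_add_one_le
    have hcompl : Fintype.card {v : V | v ∉ X} = Xᶜ.card :=
      Fintype.card_of_subtype _ (by simp)
    rw [hcompl] at hforest
    nlinarith
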